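/- Let c and s be positive integers and μ a real number with 0 < μ < 1. Define α(i,j) = binom(c,i)·μ^i·(1-μ)^{c-i}·binom(s,j)·μ^j·(1-μ)^{s-j} for 0 ≤ i ≤ c and 0 ≤ j ≤ s, and q(u,v) = binom(v,u)·binom(c+s-1-v, c-u)/binom(c+s-1, c) with q(u,v) = 0 when u > v. Then for all integers i,j with 0 ≤ i ≤ c and 0 ≤ j ≤ s-1: binom(c+s, i+j)·μ^{i+j}·(1-μ)^{c+s-(i+j)}·q(i, i+j) = α(i,j)·(c+s)·(s-j)/(s·(c+s-(i+j))). -/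

import Mathlib

/-!
Write `c = i + a` and `s = j + b + 1`. The powers of `μ` and `1 - μ` on the two sides agree, and
expanding every binomial coefficient into factorials (`Nat.cast_add_choose`), together with
`(n + 1)! = (n + 1) n!` for `n = c + s - 1`, `a + b`, `s - 1` and `b`, makes both sides equal to the
same quotient; the four linear factors `c + s`, `c + s - (i + j)`, `s` and `s - j` are exactly those
of the claimed correction.
-/

/-- The product-of-binomials distribution `α(i,j)` on the state space. -/
noncomputable def alpha (c s : ℕ) (μ : ℝ) (i j : ℕ) : ℝ :=
  (c.choose i : ℝ) * μ ^ i * (1 - μ) ^ (c - i) * ((s.choose j : ℝ) * μ ^ j * (1 - μ) ^ (s - j))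

/-- The hypergeometric probability `q(u,v)`, with the convention `q(u,v) = 0`
when `u > v`. -/
noncomputable def hyp (c s : ℕ) (u v : ℕ) : ℝ :=
  if v < u then 0
  else ((v.choose u : ℝ) * ((c + s - 1 - v).choose (c - u) : ℝ)) / ((c + s - 1).choose c : ℝ)

/-- `binom(c+s, i+j) μ^{i+j} (1-μ)^{c+s-(i+j)} q(i, i+j) = α(i,j)·(c+s)(s-j)/(s(c+s-(i+j)))`. -/
theorem binom_mul_hyp_eq_alpha (c s : ℕ) (hc : 0 < c) (hs : 0 < s)
    (μ : ℝ) (hμ0 : 0 < μ) (hμ1 : μ < 1) (i j : ℕ) (hi : i ≤ c) (hj : j ≤ s - 1) :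
    ((c + s).choose (i + j) : ℝ) * μ ^ (i + j) * (1 - μ) ^ (c + s - (i + j)) * hyp c s i (i + j)
      = alpha c s μ i j * (((c : ℝ) + s) * ((s : ℝ) - j))
          / ((s : ℝ) * (((c : ℝ) + s) - ((i : ℝ) + j))) := by
  -- With `c = i + a` and `s = j + b + 1` no natural-number subtraction is left.
  obtain ⟨a, rfl⟩ := Nat.exists_eq_add_of_le hi
  obtain ⟨b, rfl⟩ : ∃ b, s = j + (b + 1) := ⟨s - 1 - j, by omega⟩
  have e1 : i + a + (j + (b + 1)) - (i + j) = a + (b + 1) := by omega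
  have e2 : i + a + (j + (b + 1)) - 1 - (i + j) = a + b := by omega
  have e3 : i + a + (j + (b + 1)) - 1 = (i + a) + (j + b) := by omega
  have e4 : i + a + (j + (b + 1)) = (i + j) + (a + b + 1) := by omega
  have h1 : (((i + j) + (a + b + 1)).factorial : ℝ)
      = (i + j + a + b + 1) * ((i + a) + (j + b)).factorial := by
    rw [show (i + j) + (a + b + 1) = ((i + a) + (j + b)) + 1 by omega, Nat.factorial_succ]
    push_cast
    ring
  have h2 : ((a + b + 1).factorial : ℝ) = (a + b + 1) * (a + b).factorial := by
    rw [Nat.factorial_succ]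
    push_cast
    ring
  have h3 : ((j + (b + 1)).factorial : ℝ) = (j + b + 1) * (j + b).factorial := by
    rw [← Nat.add_assoc, Nat.factorial_succ]
    push_cast
    ring
  have h4 : ((b + 1).factorial : ℝ) = (b + 1) * b.factorial := by
    rw [Nat.factorial_succ]
    push_cast
    ring
  have hf : ∀ n : ℕ, (n.factorial : ℝ) ≠ 0 := fun n => by positivity
  have f1 := hf ((i + a) + (j + b))
  have f2 := hf (a + b)
  have f3 := hf (j + b)
  have f4 := hf b
  have f5 := hf (i + a)
  have f6 := hf (i + j)
  have f7 := hf i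
  have f8 := hf j
  have f9 := hf a
  have p1 : (a : ℝ) + b + 1 ≠ 0 := by positivity
  have p2 : (j : ℝ) + b + 1 ≠ 0 := by positivity
  have p3 : (b : ℝ) + 1 ≠ 0 := by positivity
  have d1 : ((i + a : ℕ) : ℝ) + ((j + (b + 1) : ℕ) : ℝ) - ((i : ℝ) + j) = a + b + 1 := by
    push_cast
    ring
  have d2 : ((j + (b + 1) : ℕ) : ℝ) - j = b + 1 := by
    push_cast
    ring
  have d3 : ((j + (b + 1) : ℕ) : ℝ) = j + b + 1 := by
    push_cast
    ring
  have d4 : ((i + a : ℕ) : ℝ) + (j + b + 1) = i + j + a + b + 1 := by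
    push_cast
    ring
  unfold hyp alpha
  rw [if_neg (by omega), e1, e2, e3, e4, Nat.add_sub_cancel_left, Nat.add_sub_cancel_left,
    d1, d2, d3, d4]
  simp only [Nat.cast_add_choose ℝ]
  rw [h1, h2, h3, h4]
  field_simp
  ring
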